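/- Let 1 ≤ K_1 ≤ K_r ≤ P/2 be integers and set p_1r = 1 − C(P−K_1, K_r)/C(P, K_r) and p_rr = 1 − C(P−K_r, K_r)/C(P, K_r). If p_1r ≤ 1/2, then p_rr ≤ 4 (K_r/K_1) p_1r. -/

import Mathlib

/-!
The binomial coefficient `C(n, k)` is a convex function of `n`, so `avoidProb P · b` is convex on
`{0, …, P}`. It equals `1` at `0`, hence `pEdge P · b` is concave and vanishes at `0`, and
`pEdge P a b / a` is antitone in `a`. At `b = K_r` this gives `p_rr ≤ (K_r / K_1) p_1r`, without
the factor `4` that separate upper and lower estimates of the two probabilities would cost.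
-/

open Filter

/-- Probability that a uniformly random `b`-subset of a `P`-set avoids a fixed `a`-subset. -/
noncomputable def avoidProb (P a b : ℕ) : ℝ := ((P - a).choose b : ℝ) / (P.choose b : ℝ)

/-- `p_{ab}` : probability that independent uniformly random key rings of sizes
`a` and `b` (from a pool of size `P`) intersect. -/
noncomputable def pEdge (P a b : ℕ) : ℝ := 1 - avoidProb P a b

theorem choose_le_sum_mul_choose {ι : Type*} {t : Finset ι} {w : ι → ℝ} {p : ι → ℕ} {m : ℕ}
    (h₀ : ∀ i ∈ t, 0 ≤ w i) (h₁ : ∑ i ∈ t, w i = 1) (hm : ∑ i ∈ t, w i * p i = m) (k : ℕ) :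
    (m.choose k : ℝ) ≤ ∑ i ∈ t, w i * (p i).choose k := by
  rcases eq_or_ne k 0 with rfl | hk
  · simp [h₁]
  rcases lt_or_ge m k with hmk | hkm
  · rw [Nat.choose_eq_zero_of_lt hmk, Nat.cast_zero]
    exact Finset.sum_nonneg fun i hi ↦ mul_nonneg (h₀ i hi) (Nat.cast_nonneg _)
  · have hmean : (k : ℝ) - 1 ≤ ∑ i ∈ t, w i * p i := by
      linarith [(mod_cast hkm : (k : ℝ) ≤ m)]
    have jensen := descPochhammer_eval_div_factorial_le_sum_choose hk p w h₀ h₁ hmean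
    rwa [hm, ← Nat.cast_choose_eq_descPochhammer_div] at jensen

theorem mul_choose_sub_le {n a c : ℕ} (hac : a ≤ c) (hcn : c ≤ n) (k : ℕ) :
    (c : ℝ) * (n - a).choose k ≤ (c - a) * n.choose k + a * (n - c).choose k := by
  rcases c.eq_zero_or_pos with rfl | hc
  · simp [Nat.le_zero.mp hac]
  have hc' : (0 : ℝ) < c := mod_cast hc
  have hratio_nonneg : (0 : ℝ) ≤ a / c := by positivity
  have hratio_le_one : (a : ℝ) / c ≤ 1 := div_le_one_of_le₀ (mod_cast hac) hc'.le
  have hbarycenter : (1 - (a : ℝ) / c) * n + a / c * (n - c : ℕ) = (n - a : ℕ) := by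
    rw [Nat.cast_sub hcn, Nat.cast_sub (hac.trans hcn)]
    field
  have hconvex : ((n - a).choose k : ℝ) ≤
      (1 - (a : ℝ) / c) * n.choose k + a / c * (n - c).choose k := by
    have hnonneg : ∀ i ∈ Finset.univ, 0 ≤ ![1 - (a : ℝ) / c, a / c] i := by
      simp [Fin.forall_fin_two, hratio_le_one, hratio_nonneg]
    simpa using choose_le_sum_mul_choose (p := ![n, n - c]) hnonneg (by simp)
      (by simpa using hbarycenter) k
  calc (c : ℝ) * (n - a).choose k
      ≤ c * ((1 - (a : ℝ) / c) * n.choose k + a / c * (n - c).choose k) := by gcongr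
    _ = (c - a) * n.choose k + a * (n - c).choose k := by field

theorem avoidProb_le_one (P a b : ℕ) : avoidProb P a b ≤ 1 :=
  div_le_one_of_le₀ (mod_cast Nat.choose_le_choose b (Nat.sub_le P a)) (Nat.cast_nonneg _)

theorem pEdge_nonneg (P a b : ℕ) : 0 ≤ pEdge P a b :=
  sub_nonneg.mpr (avoidProb_le_one P a b)

theorem pEdge_eq_sub_div {P b : ℕ} (hb : b ≤ P) (a : ℕ) :
    pEdge P a b = (P.choose b - (P - a).choose b : ℝ) / P.choose b := by
  have hchoose : (P.choose b : ℝ) ≠ 0 := mod_cast (Nat.choose_pos hb).ne'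
  rw [pEdge, avoidProb, sub_div, div_self hchoose]

theorem mul_pEdge_le_mul_pEdge {P a b c : ℕ} (hac : a ≤ c) (hc : c ≤ P) (hb : b ≤ P) :
    a * pEdge P c b ≤ c * pEdge P a b := by
  rw [pEdge_eq_sub_div hb, pEdge_eq_sub_div hb, ← mul_div_assoc, ← mul_div_assoc]
  gcongr ?_ / _
  linarith [mul_choose_sub_le hac hc b]

theorem prr_upper_bound_general {P a b c : ℕ} (ha : 1 ≤ a) (hac : a ≤ c) (hc : c ≤ P)
    (hb : b ≤ P) : pEdge P c b ≤ (c : ℝ) / a * pEdge P a b := by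
  rw [div_mul_eq_mul_div, le_div_iff₀' (mod_cast ha)]
  exact mul_pEdge_le_mul_pEdge hac hc hb

/-- if `p_{1r} ≤ 1/2` then `p_{rr} ≤ 4 (K_r/K₁) p_{1r}`. -/
theorem prr_upper_bound (K1 Kr P : ℕ) (hK1 : 1 ≤ K1) (hK1r : K1 ≤ Kr) (hKP : 2 * Kr ≤ P)
    (h : pEdge P K1 Kr ≤ 1 / 2) :
    pEdge P Kr Kr ≤ 4 * ((Kr : ℝ) / (K1 : ℝ)) * pEdge P K1 Kr := by
  have hKr : Kr ≤ P := by lia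
  have hnonneg : 0 ≤ (Kr : ℝ) / K1 * pEdge P K1 Kr := mul_nonneg (by positivity) (pEdge_nonneg ..)
  linarith [prr_upper_bound_general hK1 hK1r hKr hKr]
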